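/- Let A ∈ ℝ^{m×n} with m ≤ n and A ≠ 0, with largest and smallest singular values σ₁ and σ_m, let k be a positive integer with 3k ≤ n, let δ₁ ∈ (0,1) be a restricted isometry constant of order k for A, let δ₂ ∈ (0,1) be a restricted isometry constant of order 2k for A, and let δ₃ ∈ (0,1) be a restricted isometry constant of order 3k for A. Suppose ε > σ₁² and 0 ≤ λ ≤ ε + σ_m². Let x ∈ ℝ^n, e ∈ ℝ^m, y = Ax + e, let x_S be a hard k-thresholding of x, and set e' := A(x − x_S) + e. Let x^p ∈ ℝ^n be k-sparse, let x̄^p be a hard k-thresholding of x^p + λ(AᵀA + εI)^{−1}Aᵀ(y − Ax^p), and let x^{p+1} be a minimizer of ‖y − Az‖₂ over all z ∈ ℝ^n with supp(z) ⊆ supp(x̄^p). Then ‖x^{p+1} − x_S‖₂ ≤ (√3(δ₃ + σ₁² − λσ₁²/(ε + σ₁²))/√(1 − δ₂²)) ‖x^p − x_S‖₂ + ( √3 λ σ₁ / (√(1 − δ₂²)(ε + σ₁²)) + √(1 + δ₁)/(1 − δ₂) ) ‖e'‖₂. -/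

import Mathlib

/-! Put `z` for the vector that is thresholded in the step, `S` for the support index set of `xS`,
`S'` for that of `xbar`, `U = supp xbar ⊆ S'` and `w = xp1 - xS`. Since `y = A xS + e'`,

`z - xS = (I - AᵀA) u + (AᵀA - λ R AᵀA) u + λ R Aᵀ e'`, with `u = xp - xS`, `R = (AᵀA + ε I)⁻¹`.

* On `S ∪ S'` the first term is at most `δ₃ ‖u‖`, because restricted to a set of `3k` coordinates
  the form `⟨u, v⟩ - ⟨Au, Av⟩` is bounded by `δ₃ ‖u‖ ‖v‖` (`ric_bilin`, `ric_trunc`).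
* The other two terms are bounded by diagonalizing `AᵀA` (`exists_eigenbasis`). The eigenvalue
  function `s ↦ s - λ s / (ε + s)` is nonnegative and at most its value at `σ₁²`
  (`gap_scalar`, `norm2_gap`); `s ↦ √s / (ε + s)` is increasing on `[0, ε]`, which is where
  `σ₁² < ε` enters (`resolvent_scalar`, `norm2_resolvent`).
* Hard thresholding loses a factor `√2 ≤ √3` : `‖(xS)_{Uᶜ}‖ ≤ √2 ‖(xS - z)_{S ∪ S'}‖`
  (`threshold_bound`).
* The least squares step makes the residual orthogonal to `A v` for every `v` supported in `U`
  (`lsq_orthogonal`); testing with `v = w_U` gives `‖w_U‖ ≤ δ₂ ‖w‖ + √(1 + δ₁) ‖e'‖`.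
  As `‖w‖² = ‖w_U‖² + ‖(xS)_{Uᶜ}‖²`, solving this quadratic inequality (`quadratic_bound`) gives
  `‖w‖ ≤ ‖(xS)_{Uᶜ}‖ / √(1 - δ₂²) + √(1 + δ₁) / (1 - δ₂) ‖e'‖`. -/

open Matrix Filter Topology

/-- Euclidean (ℓ₂) norm of a vector in ℝ^n. -/
noncomputable def norm2 {n : ℕ} (x : Fin n → ℝ) : ℝ := Real.sqrt (∑ i, x i ^ 2)

/-- Euclidean inner product. -/
def dot {n : ℕ} (u v : Fin n → ℝ) : ℝ := ∑ i, u i * v i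

/-- Support of a vector. -/
def supp {n : ℕ} (x : Fin n → ℝ) : Set (Fin n) := {i | x i ≠ 0}

/-- δ ∈ (0,1) is a restricted isometry constant of order q for A. -/
def IsRIC {m n : ℕ} (A : Matrix (Fin m) (Fin n) ℝ) (q : ℕ) (δ : ℝ) : Prop :=
  0 < δ ∧ δ < 1 ∧
    ∀ x : Fin n → ℝ, (supp x).ncard ≤ q →
      (1 - δ) * norm2 x ^ 2 ≤ norm2 (A.mulVec x) ^ 2 ∧
      norm2 (A.mulVec x) ^ 2 ≤ (1 + δ) * norm2 x ^ 2

/-- σ is the largest singular value (spectral norm) of A: it bounds ‖Av‖₂/‖v‖₂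
and this bound is attained. -/
def IsMaxSingularValue {m n : ℕ} (A : Matrix (Fin m) (Fin n) ℝ) (σ : ℝ) : Prop :=
  0 ≤ σ ∧ (∀ v : Fin n → ℝ, norm2 (A.mulVec v) ≤ σ * norm2 v) ∧
    ∃ v : Fin n → ℝ, v ≠ 0 ∧ norm2 (A.mulVec v) = σ * norm2 v

/-- For m ≤ n, σ is the smallest singular value of A, i.e. σ² is the smallest
eigenvalue of A Aᵀ: σ is the infimum of ‖Aᵀu‖₂/‖u‖₂ and it is attained. -/
def IsMinSingularValue {m n : ℕ} (A : Matrix (Fin m) (Fin n) ℝ) (σ : ℝ) : Prop :=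
  0 ≤ σ ∧ (∀ u : Fin m → ℝ, σ * norm2 u ≤ norm2 (Aᵀ.mulVec u)) ∧
    ∃ u : Fin m → ℝ, u ≠ 0 ∧ norm2 (Aᵀ.mulVec u) = σ * norm2 u

/-- w is a hard k-thresholding of z with associated index set S*. -/
def IsHardThresholding {n : ℕ} (k : ℕ) (z w : Fin n → ℝ) (S : Set (Fin n)) : Prop :=
  S.ncard = k ∧ (∀ i ∈ S, w i = z i) ∧ (∀ i ∉ S, w i = 0) ∧
    ∀ i ∈ S, ∀ j ∉ S, |z j| ≤ |z i|

/-! ### The Euclidean norm and truncation -/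

lemma norm2_nonneg {n : ℕ} (x : Fin n → ℝ) : 0 ≤ norm2 x := Real.sqrt_nonneg _

lemma norm2_sq {n : ℕ} (x : Fin n → ℝ) : norm2 x ^ 2 = x ⬝ᵥ x := by
  rw [norm2, Real.sq_sqrt (Finset.sum_nonneg fun i _ => sq_nonneg _)]
  simp [dotProduct, sq]

lemma norm2_eq_norm {n : ℕ} (x : Fin n → ℝ) : norm2 x = ‖WithLp.toLp 2 x‖ := by
  simp [norm2, EuclideanSpace.norm_eq]

lemma norm2_add_le {n : ℕ} (x y : Fin n → ℝ) : norm2 (x + y) ≤ norm2 x + norm2 y := by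
  simp only [norm2_eq_norm, WithLp.toLp_add]
  exact norm_add_le _ _

lemma norm2_smul {n : ℕ} (c : ℝ) (x : Fin n → ℝ) : norm2 (c • x) = |c| * norm2 x := by
  simp only [norm2_eq_norm, WithLp.toLp_smul, norm_smul, Real.norm_eq_abs]

lemma dotProduct_le_norm2 {n : ℕ} (x y : Fin n → ℝ) : x ⬝ᵥ y ≤ norm2 x * norm2 y := by
  refine (abs_le_of_sq_le_sq' ?_ (mul_nonneg (norm2_nonneg x) (norm2_nonneg y))).2
  rw [mul_pow, norm2_sq, norm2_sq]
  have h := Finset.sum_mul_sq_le_sq_mul_sq Finset.univ x y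
  simpa [dotProduct, sq] using h

/-- The vector that agrees with `v` on `T` and vanishes elsewhere. -/
noncomputable def trunc {n : ℕ} (T : Finset (Fin n)) (v : Fin n → ℝ) : Fin n → ℝ :=
  fun i => if i ∈ T then v i else 0

lemma trunc_dotProduct {n : ℕ} (T : Finset (Fin n)) (v u : Fin n → ℝ) :
    trunc T v ⬝ᵥ u = ∑ i ∈ T, v i * u i := by
  simp [trunc, dotProduct, ite_mul, Finset.sum_ite_mem]

lemma trunc_dotProduct_trunc {n : ℕ} (T : Finset (Fin n)) (v : Fin n → ℝ) :
    trunc T v ⬝ᵥ trunc T v = trunc T v ⬝ᵥ v := by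
  rw [trunc_dotProduct, trunc_dotProduct]
  exact Finset.sum_congr rfl fun i hi => by simp [trunc, hi]

lemma norm2_trunc_sq {n : ℕ} (T : Finset (Fin n)) (v : Fin n → ℝ) :
    norm2 (trunc T v) ^ 2 = ∑ i ∈ T, v i ^ 2 := by
  rw [norm2_sq, trunc_dotProduct_trunc, trunc_dotProduct]
  simp [sq]

lemma norm2_trunc_le {n : ℕ} (T : Finset (Fin n)) (v : Fin n → ℝ) :
    norm2 (trunc T v) ≤ norm2 v := by
  refine (pow_le_pow_iff_left₀ (norm2_nonneg _) (norm2_nonneg _) two_ne_zero).1 ?_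
  rw [norm2_trunc_sq, norm2_sq]
  simp only [dotProduct, ← sq]
  exact Finset.sum_le_univ_sum_of_nonneg fun i => sq_nonneg _

lemma trunc_add {n : ℕ} (T : Finset (Fin n)) (v u : Fin n → ℝ) :
    trunc T (v + u) = trunc T v + trunc T u := by
  ext i
  by_cases h : i ∈ T <;> simp [trunc, h]

lemma trunc_apply_of_notMem {n : ℕ} {T : Finset (Fin n)} (v : Fin n → ℝ) {i : Fin n}
    (hi : i ∉ T) : trunc T v i = 0 := by simp [trunc, hi]

lemma ncard_supp_le {n : ℕ} {T : Finset (Fin n)} {v : Fin n → ℝ} (hv : ∀ i ∉ T, v i = 0) :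
    (supp v).ncard ≤ T.card := by
  rw [← Set.ncard_coe_finset]
  refine Set.ncard_le_ncard (fun i hi => ?_) T.finite_toSet
  by_contra h
  exact hi (hv i h)

/-! ### Consequences of the restricted isometry property -/

/-- If a quadratic polynomial `a t² + 2 b t + c` is nonnegative then `b² ≤ a c`. -/
lemma sq_le_of_quadratic_nonneg {a b c : ℝ} (h : ∀ t : ℝ, 0 ≤ a * (t * t) + 2 * b * t + c) :
    b ^ 2 ≤ a * c := by
  have := discrim_le_zero h
  rw [discrim] at this
  nlinarith

/-- On vectors supported in a fixed set of at most `q` indices, `AᵀA` differs from the identity by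
at most `δ`, as a bilinear form. -/
lemma ric_bilin {m n q : ℕ} {A : Matrix (Fin m) (Fin n) ℝ} {δ : ℝ} (h : IsRIC A q δ)
    (T : Finset (Fin n)) (hT : T.card ≤ q) (u v : Fin n → ℝ)
    (hu : ∀ i ∉ T, u i = 0) (hv : ∀ i ∉ T, v i = 0) :
    u ⬝ᵥ v - (A *ᵥ u) ⬝ᵥ (A *ᵥ v) ≤ δ * norm2 u * norm2 v := by
  obtain ⟨h0, -, hA⟩ := h
  have key : ∀ t : ℝ, 0 ≤ δ * norm2 u ^ 2 * (t * t)
      + 2 * (u ⬝ᵥ v - (A *ᵥ u) ⬝ᵥ (A *ᵥ v)) * t + δ * norm2 v ^ 2 := by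
    intro t
    -- polarization: add the RIP bounds for `t u + v` and `t u - v`
    have h1 := (hA (t • u + v) ((ncard_supp_le (T := T) fun i hi => by
      simp [hu i hi, hv i hi]).trans hT)).2
    have h2 := (hA (t • u + v) ((ncard_supp_le (T := T) fun i hi => by
      simp [hu i hi, hv i hi]).trans hT)).1
    have h3 := (hA (t • u - v) ((ncard_supp_le (T := T) fun i hi => by
      simp [hu i hi, hv i hi]).trans hT)).2
    have h4 := (hA (t • u - v) ((ncard_supp_le (T := T) fun i hi => by
      simp [hu i hi, hv i hi]).trans hT)).1
    simp only [norm2_sq, mulVec_add, mulVec_sub, mulVec_smul, add_dotProduct, dotProduct_add,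
      sub_dotProduct, dotProduct_sub, smul_dotProduct, dotProduct_smul, smul_eq_mul,
      dotProduct_comm v u, dotProduct_comm (A *ᵥ v) (A *ᵥ u)] at h1 h2 h3 h4 ⊢
    linarith
  have h5 := sq_le_of_quadratic_nonneg key
  have h6 : 0 ≤ δ * norm2 u * norm2 v :=
    mul_nonneg (mul_nonneg h0.le (norm2_nonneg u)) (norm2_nonneg v)
  refine (abs_le_of_sq_le_sq' (h5.trans (le_of_eq ?_)) h6).2
  ring

lemma dotProduct_gram {m n : ℕ} (A : Matrix (Fin m) (Fin n) ℝ) (u v : Fin n → ℝ) :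
    v ⬝ᵥ ((Aᵀ * A) *ᵥ u) = (A *ᵥ v) ⬝ᵥ (A *ᵥ u) := by
  rw [← mulVec_mulVec, dotProduct_mulVec, vecMul_transpose]

lemma ric_trunc {m n q : ℕ} {A : Matrix (Fin m) (Fin n) ℝ} {δ : ℝ} (h : IsRIC A q δ)
    (W T : Finset (Fin n)) (hTW : T ⊆ W) (hW : W.card ≤ q) (u : Fin n → ℝ)
    (hu : ∀ i ∉ W, u i = 0) :
    norm2 (trunc T (u - (Aᵀ * A) *ᵥ u)) ≤ δ * norm2 u := by
  set v := trunc T (u - (Aᵀ * A) *ᵥ u) with hv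
  have h1 : norm2 v ^ 2 = v ⬝ᵥ u - (A *ᵥ v) ⬝ᵥ (A *ᵥ u) := by
    rw [norm2_sq, hv, trunc_dotProduct_trunc, ← hv, dotProduct_sub, dotProduct_gram]
  have h2 := ric_bilin h W hW v u
    (fun i hi => trunc_apply_of_notMem _ fun hiT => hi (hTW hiT)) hu
  rcases (norm2_nonneg v).eq_or_lt with h0 | h0
  · rw [← h0]
    exact mul_nonneg h.1.le (norm2_nonneg u)
  · refine le_of_mul_le_mul_left ?_ h0
    calc norm2 v * norm2 v = norm2 v ^ 2 := (sq _).symm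
      _ ≤ δ * norm2 v * norm2 u := h1 ▸ h2
      _ = norm2 v * (δ * norm2 u) := by ring

/-! ### Spectral bounds for the Newton-type step -/

lemma exists_eigenbasis {n : ℕ} {H : Matrix (Fin n) (Fin n) ℝ} (hH : H.IsHermitian) :
    ∃ (b : Fin n → Fin n → ℝ) (μ : Fin n → ℝ), (∀ i, H *ᵥ b i = μ i • b i) ∧
      (∀ v : Fin n → ℝ, norm2 v ^ 2 = ∑ i, (b i ⬝ᵥ v) ^ 2) ∧ ∀ i, norm2 (b i) = 1 := by
  refine ⟨fun i => (hH.eigenvectorBasis i).ofLp, hH.eigenvalues,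
    fun i => hH.mulVec_eigenvectorBasis i, fun v => ?_, fun i => ?_⟩
  · rw [norm2_eq_norm, ← hH.eigenvectorBasis.sum_sq_norm_inner_right]
    refine Finset.sum_congr rfl fun i _ => ?_
    rw [Real.norm_eq_abs, sq_abs, EuclideanSpace.inner_eq_star_dotProduct, dotProduct_comm]
    simp
  · rw [norm2_eq_norm]
    exact hH.eigenvectorBasis.orthonormal.1 i

/-- Parseval: a coefficientwise bound in an orthonormal basis bounds the norm. -/
lemma norm2_le_of_coeff {n : ℕ} {b : Fin n → Fin n → ℝ}
    (hb : ∀ v : Fin n → ℝ, norm2 v ^ 2 = ∑ i, (b i ⬝ᵥ v) ^ 2) {u v : Fin n → ℝ} {C : ℝ}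
    (hC : 0 ≤ C) (g : Fin n → ℝ) (hg : ∀ i, |g i| ≤ C)
    (h : ∀ i, b i ⬝ᵥ v = g i * (b i ⬝ᵥ u)) : norm2 v ≤ C * norm2 u := by
  refine (pow_le_pow_iff_left₀ (norm2_nonneg _) (mul_nonneg hC (norm2_nonneg _)) two_ne_zero).1 ?_
  rw [mul_pow, hb, hb, Finset.mul_sum]
  refine Finset.sum_le_sum fun i _ => ?_
  rw [h i, mul_pow]
  exact mul_le_mul_of_nonneg_right (sq_le_sq.2 ((hg i).trans (le_abs_self C))) (sq_nonneg _)

lemma gram_isHermitian {m n : ℕ} (A : Matrix (Fin m) (Fin n) ℝ) : (Aᵀ * A).IsHermitian := by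
  simpa using isHermitian_conjTranspose_mul_self A

/-- The regularized matrix `AᵀA + εI` is invertible, so its matrix inverse is a true inverse. -/
lemma resolvent_spec {m n : ℕ} (A : Matrix (Fin m) (Fin n) ℝ) {ε : ℝ} (hε : 0 < ε)
    (v : Fin n → ℝ) :
    (Aᵀ * A) *ᵥ ((Aᵀ * A + ε • (1 : Matrix (Fin n) (Fin n) ℝ))⁻¹ *ᵥ v)
      + ε • ((Aᵀ * A + ε • (1 : Matrix (Fin n) (Fin n) ℝ))⁻¹ *ᵥ v) = v := by
  have h1 : (Aᵀ * A).PosSemidef := by simpa using posSemidef_conjTranspose_mul_self A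
  have h2 : (Aᵀ * A + ε • (1 : Matrix (Fin n) (Fin n) ℝ)).PosDef :=
    PosDef.posSemidef_add h1 (PosDef.one.smul hε)
  have h3 := mul_nonsing_inv _ ((isUnit_iff_isUnit_det _).1 h2.isUnit)
  have h4 := congrArg (fun M => M *ᵥ v) h3
  simpa only [← mulVec_mulVec, one_mulVec, add_mulVec, smul_mulVec] using h4

lemma eigen_coeff {m n : ℕ} {A : Matrix (Fin m) (Fin n) ℝ} {b : Fin n → ℝ} {μ : ℝ}
    (hb : (Aᵀ * A) *ᵥ b = μ • b) (v : Fin n → ℝ) :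
    b ⬝ᵥ ((Aᵀ * A) *ᵥ v) = μ * (b ⬝ᵥ v) := by
  rw [dotProduct_gram, dotProduct_comm, ← dotProduct_gram, hb, dotProduct_smul, smul_eq_mul,
    dotProduct_comm]

/-- The coefficient of `(AᵀA + εI)⁻¹ v` along an eigenvector. -/
lemma eigen_coeff_resolvent {m n : ℕ} {A : Matrix (Fin m) (Fin n) ℝ} {b : Fin n → ℝ} {μ ε : ℝ}
    (hb : (Aᵀ * A) *ᵥ b = μ • b) (hμ : 0 ≤ μ) (hε : 0 < ε) (v : Fin n → ℝ) :
    b ⬝ᵥ ((Aᵀ * A + ε • (1 : Matrix (Fin n) (Fin n) ℝ))⁻¹ *ᵥ v) = (b ⬝ᵥ v) / (ε + μ) := by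
  have h := congrArg (fun w => b ⬝ᵥ w) (resolvent_spec A hε v)
  simp only [dotProduct_add, eigen_coeff hb, dotProduct_smul, smul_eq_mul] at h
  rw [eq_div_iff (by positivity)]
  linarith

/-- Eigenvalues of `AᵀA` lie in `[0, σ₁²]`, and the nonzero ones are at least `σ_m²`. -/
lemma eigenvalue_bounds {m n : ℕ} {A : Matrix (Fin m) (Fin n) ℝ} {σ1 σm : ℝ}
    (hσ1 : IsMaxSingularValue A σ1) (hσm : IsMinSingularValue A σm) {b : Fin n → ℝ} {μ : ℝ}
    (hb : (Aᵀ * A) *ᵥ b = μ • b) (hb1 : norm2 b = 1) :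
    0 ≤ μ ∧ μ ≤ σ1 ^ 2 ∧ (μ = 0 ∨ σm ^ 2 ≤ μ) := by
  have h1 : norm2 (A *ᵥ b) ^ 2 = μ := by
    rw [norm2_sq, ← dotProduct_gram, hb, dotProduct_smul, ← norm2_sq, hb1]
    simp
  have h0 : 0 ≤ μ := h1 ▸ sq_nonneg _
  refine ⟨h0, ?_, ?_⟩
  · rw [← h1]
    refine pow_le_pow_left₀ (norm2_nonneg _) ?_ 2
    simpa [hb1] using hσ1.2.1 b
  · rcases h0.eq_or_lt with h | h
    · exact Or.inl h.symm
    · right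
      have h2 := hσm.2.1 (A *ᵥ b)
      rw [mulVec_mulVec, hb, norm2_smul, hb1, abs_of_nonneg h0, mul_one] at h2
      have h3 := pow_le_pow_left₀ (mul_nonneg hσm.1 (norm2_nonneg _)) h2 2
      rw [mul_pow, h1, sq μ] at h3
      exact le_of_mul_le_mul_right h3 h

lemma gap_scalar {s σ ε lam c : ℝ} (hs0 : 0 ≤ s) (hs : s ≤ σ ^ 2) (hε : 0 < ε)
    (hlam : lam ≤ ε + c) (hcσ : c ≤ σ ^ 2) (hsc : s = 0 ∨ c ≤ s) :
    |s - lam * (s / (ε + s))| ≤ σ ^ 2 - lam * σ ^ 2 / (ε + σ ^ 2) := by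
  have hσ : 0 < ε + σ ^ 2 := by positivity
  have e2 : σ ^ 2 - lam * σ ^ 2 / (ε + σ ^ 2) = σ ^ 2 * (ε + σ ^ 2 - lam) / (ε + σ ^ 2) := by
    field_simp
  have hr : 0 ≤ σ ^ 2 - lam * σ ^ 2 / (ε + σ ^ 2) := by
    rw [e2]
    exact div_nonneg (mul_nonneg (sq_nonneg _) (by linarith)) hσ.le
  rcases hsc with rfl | hsc
  · simpa using hr
  have hs' : 0 < ε + s := by positivity
  have e1 : s - lam * (s / (ε + s)) = s * (ε + s - lam) / (ε + s) := by
    field_simp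
  rw [e2, e1, abs_of_nonneg (div_nonneg (mul_nonneg hs0 (by linarith)) hs'.le),
    div_le_div_iff₀ hs' hσ]
  -- the difference of the two sides is `(σ² - s) ((ε + s) (ε + σ²) - ε lam)`
  have h1 : 0 ≤ (ε + s) * (ε + σ ^ 2) - ε * lam := by
    nlinarith [mul_nonneg hs0 hσ.le, mul_le_mul_of_nonneg_left (hlam.trans
      (add_le_add_right hcσ ε)) hε.le]
  nlinarith [mul_nonneg (sub_nonneg.2 hs) h1]

lemma norm2_gap {m n : ℕ} {A : Matrix (Fin m) (Fin n) ℝ} {σ1 σm ε lam : ℝ}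
    (hσ1 : IsMaxSingularValue A σ1) (hσm : IsMinSingularValue A σm) (hσ : σm ^ 2 ≤ σ1 ^ 2)
    (hε : 0 < ε) (hlam : lam ≤ ε + σm ^ 2) (u : Fin n → ℝ) :
    norm2 ((Aᵀ * A) *ᵥ u -
      lam • ((Aᵀ * A + ε • (1 : Matrix (Fin n) (Fin n) ℝ))⁻¹ *ᵥ ((Aᵀ * A) *ᵥ u))) ≤
      (σ1 ^ 2 - lam * σ1 ^ 2 / (ε + σ1 ^ 2)) * norm2 u := by
  obtain ⟨b, μ, hb, hpars, hb1⟩ := exists_eigenbasis (gram_isHermitian A)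
  have hC : 0 ≤ σ1 ^ 2 - lam * σ1 ^ 2 / (ε + σ1 ^ 2) := by
    simpa using gap_scalar (s := 0) le_rfl (sq_nonneg σ1) hε hlam hσ (Or.inl rfl)
  refine norm2_le_of_coeff hpars hC (fun i => μ i - lam * (μ i / (ε + μ i))) (fun i => ?_)
    fun i => ?_
  · obtain ⟨h0, h1, h2⟩ := eigenvalue_bounds hσ1 hσm (hb i) (hb1 i)
    exact gap_scalar h0 h1 hε hlam hσ h2
  · obtain ⟨h0, h1, h2⟩ := eigenvalue_bounds hσ1 hσm (hb i) (hb1 i)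
    rw [dotProduct_sub, dotProduct_smul, eigen_coeff_resolvent (hb i) h0 hε, eigen_coeff (hb i),
      smul_eq_mul]
    ring

lemma resolvent_scalar {s σ ε : ℝ} (hs0 : 0 ≤ s) (hsσ : s ≤ σ) (hε : σ ^ 2 < ε) :
    s / (ε + s ^ 2) ≤ σ / (ε + σ ^ 2) := by
  have h1 : 0 < ε := (sq_nonneg σ).trans_lt hε
  rw [div_le_div_iff₀ (by positivity) (by positivity)]
  -- the difference of the two sides is `(σ - s) (ε - s σ)`
  have h2 : s * σ ≤ ε := by nlinarith
  nlinarith [mul_nonneg (sub_nonneg.2 hsσ) (sub_nonneg.2 h2)]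

/-- The operator norm of `(AᵀA + εI)⁻¹Aᵀ` is bounded through that of its adjoint
`A(AᵀA + εI)⁻¹`, for which `‖A q‖² = ⟨q, AᵀA q⟩` diagonalizes. -/
lemma norm2_resolvent {m n : ℕ} {A : Matrix (Fin m) (Fin n) ℝ} {σ1 σm ε : ℝ}
    (hσ1 : IsMaxSingularValue A σ1) (hσm : IsMinSingularValue A σm)
    (hε : σ1 ^ 2 < ε) (f : Fin m → ℝ) :
    norm2 ((Aᵀ * A + ε • (1 : Matrix (Fin n) (Fin n) ℝ))⁻¹ *ᵥ (Aᵀ *ᵥ f)) ≤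
      σ1 / (ε + σ1 ^ 2) * norm2 f := by
  have hε0 : 0 < ε := (sq_nonneg σ1).trans_lt hε
  have hC : 0 ≤ σ1 / (ε + σ1 ^ 2) := div_nonneg hσ1.1 (by positivity)
  obtain ⟨b, μ, hb, hpars, hb1⟩ := exists_eigenbasis (gram_isHermitian A)
  set p := (Aᵀ * A + ε • (1 : Matrix (Fin n) (Fin n) ℝ))⁻¹ *ᵥ (Aᵀ *ᵥ f) with hp
  set q := (Aᵀ * A + ε • (1 : Matrix (Fin n) (Fin n) ℝ))⁻¹ *ᵥ p with hq
  have hpq : norm2 p ^ 2 = f ⬝ᵥ (A *ᵥ q) := by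
    have h1 := resolvent_spec A hε0 (Aᵀ *ᵥ f)
    have h2 := resolvent_spec A hε0 p
    rw [← hp] at h1
    rw [← hq] at h2
    calc norm2 p ^ 2 = p ⬝ᵥ ((Aᵀ * A) *ᵥ q + ε • q) := by rw [h2, norm2_sq]
      _ = q ⬝ᵥ ((Aᵀ * A) *ᵥ p + ε • p) := by
        rw [dotProduct_add, dotProduct_add, dotProduct_gram, dotProduct_gram, dotProduct_smul,
          dotProduct_smul, dotProduct_comm p q, dotProduct_comm (A *ᵥ p)]
      _ = f ⬝ᵥ (A *ᵥ q) := by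
        rw [h1, dotProduct_mulVec, vecMul_transpose, dotProduct_comm]
  have hAq : norm2 (A *ᵥ q) ≤ σ1 / (ε + σ1 ^ 2) * norm2 p := by
    refine (pow_le_pow_iff_left₀ (norm2_nonneg _) (mul_nonneg hC (norm2_nonneg _))
      two_ne_zero).1 ?_
    have h1 : norm2 (A *ᵥ q) ^ 2 = ∑ i, μ i * (b i ⬝ᵥ q) ^ 2 := by
      -- polarized Parseval for `⟨q, AᵀA q⟩`, from the cases `v = q ± AᵀA q`
      have e1 := hpars (q + (Aᵀ * A) *ᵥ q)
      have e2 := hpars (q - (Aᵀ * A) *ᵥ q)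
      simp only [dotProduct_add, dotProduct_sub, eigen_coeff (hb _)] at e1 e2
      rw [norm2_sq] at e1 e2 ⊢
      rw [← dotProduct_gram]
      simp only [add_dotProduct, dotProduct_add, sub_dotProduct, dotProduct_sub,
        dotProduct_comm ((Aᵀ * A) *ᵥ q) q] at e1 e2
      have e3 : 4 * ∑ i, μ i * (b i ⬝ᵥ q) ^ 2 = ∑ i, (b i ⬝ᵥ q + μ i * (b i ⬝ᵥ q)) ^ 2
          - ∑ i, (b i ⬝ᵥ q - μ i * (b i ⬝ᵥ q)) ^ 2 := by
        rw [← Finset.sum_sub_distrib, Finset.mul_sum]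
        exact Finset.sum_congr rfl fun i _ => by ring
      linarith
    rw [h1, mul_pow, hpars p, Finset.mul_sum]
    refine Finset.sum_le_sum fun i _ => ?_
    obtain ⟨h0, h2, -⟩ := eigenvalue_bounds hσ1 hσm (hb i) (hb1 i)
    have h3 := resolvent_scalar (Real.sqrt_nonneg (μ i)) (Real.sqrt_le_iff.2 ⟨hσ1.1, h2⟩) hε
    have h4 := pow_le_pow_left₀ (by positivity) h3 2
    rw [div_pow, Real.sq_sqrt h0] at h4
    rw [hq, eigen_coeff_resolvent (hb i) h0 hε0]
    calc μ i * (b i ⬝ᵥ p / (ε + μ i)) ^ 2 = μ i / (ε + μ i) ^ 2 * (b i ⬝ᵥ p) ^ 2 := by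
          rw [div_pow]
          ring
      _ ≤ _ := mul_le_mul_of_nonneg_right h4 (sq_nonneg _)
  rcases (norm2_nonneg p).eq_or_lt with h0 | h0
  · rw [← h0]
    exact mul_nonneg hC (norm2_nonneg f)
  · refine le_of_mul_le_mul_left ?_ h0
    calc norm2 p * norm2 p = f ⬝ᵥ (A *ᵥ q) := by rw [← sq, hpq]
      _ ≤ norm2 f * norm2 (A *ᵥ q) := dotProduct_le_norm2 _ _
      _ ≤ norm2 f * (σ1 / (ε + σ1 ^ 2) * norm2 p) :=
        mul_le_mul_of_nonneg_left hAq (norm2_nonneg f)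
      _ = norm2 p * (σ1 / (ε + σ1 ^ 2) * norm2 f) := by ring

/-! ### Hard thresholding and the least squares step -/

/-- `U` is the support of the thresholded vector; it may be a proper subset of the selected index
set `S'`, when `z` vanishes at some selected indices. -/
lemma threshold_bound {n : ℕ} (S S' U : Finset (Fin n)) (hcard : S.card = S'.card)
    (hUS : U ⊆ S') (z a : Fin n → ℝ) (ha : ∀ i ∉ S, a i = 0)
    (hz0 : ∀ i ∈ S', i ∉ U → z i = 0) (hz : ∀ i ∈ S', ∀ j ∉ S', |z j| ≤ |z i|) :
    norm2 (trunc Uᶜ a) ≤ Real.sqrt 2 * norm2 (trunc (S ∪ S') (z - a)) := by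
  classical
  have hswap : ∑ j ∈ S \ S', z j ^ 2 ≤ ∑ i ∈ S' \ S, z i ^ 2 := by
    have hc : (S \ S').card = (S' \ S).card := Finset.card_sdiff_comm hcard
    rcases Nat.eq_zero_or_pos (S' \ S).card with h0 | h0
    · rw [h0] at hc
      rw [Finset.card_eq_zero.1 h0, Finset.card_eq_zero.1 hc]
    · -- average the pairwise comparisons over both (equinumerous) differences
      have h1 : ∑ i ∈ S' \ S, ∑ j ∈ S \ S', z j ^ 2 ≤ ∑ i ∈ S' \ S, ∑ j ∈ S \ S', z i ^ 2 :=
        Finset.sum_le_sum fun i hi => Finset.sum_le_sum fun j hj =>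
          sq_le_sq.2 (hz i (Finset.mem_sdiff.1 hi).1 j (Finset.mem_sdiff.1 hj).2)
      simp only [Finset.sum_const, nsmul_eq_mul, ← Finset.mul_sum, hc] at h1
      exact le_of_mul_le_mul_left h1 (by exact_mod_cast h0)
  have hzU : ∑ j ∈ S \ U, z j ^ 2 = ∑ j ∈ S \ S', z j ^ 2 := by
    symm
    refine Finset.sum_subset (Finset.sdiff_subset_sdiff le_rfl hUS) fun i hi hi' => ?_
    simp only [Finset.mem_sdiff, not_and, not_not] at hi hi'
    simp [hz0 i (hi' hi.1) hi.2]
  have haU : ∑ i ∈ Uᶜ, a i ^ 2 = ∑ i ∈ S \ U, a i ^ 2 := by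
    symm
    refine Finset.sum_subset (fun i hi => ?_) fun i hi hi' => ?_
    · simpa using (Finset.mem_sdiff.1 hi).2
    · have : i ∉ S := fun h => hi' (Finset.mem_sdiff.2 ⟨h, Finset.mem_compl.1 hi⟩)
      simp [ha i this]
  have hzS : ∑ i ∈ S' \ S, z i ^ 2 = ∑ i ∈ S' \ S, (z - a) i ^ 2 :=
    Finset.sum_congr rfl fun i hi => by simp [ha i (Finset.mem_sdiff.1 hi).2]
  have hdisj : Disjoint (S \ U) (S' \ S) := by
    rw [Finset.disjoint_left]
    intro i hi hi'
    exact (Finset.mem_sdiff.1 hi').2 (Finset.mem_sdiff.1 hi).1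
  have hle : ∑ i ∈ S \ U, (z - a) i ^ 2 + ∑ i ∈ S' \ S, (z - a) i ^ 2
      ≤ ∑ i ∈ S ∪ S', (z - a) i ^ 2 := by
    rw [← Finset.sum_union hdisj]
    refine Finset.sum_le_sum_of_subset_of_nonneg ?_ fun i _ _ => sq_nonneg _
    exact Finset.union_subset_union Finset.sdiff_subset Finset.sdiff_subset
  have hpt : ∑ i ∈ S \ U, a i ^ 2
      ≤ 2 * ∑ i ∈ S \ U, (z - a) i ^ 2 + 2 * ∑ i ∈ S \ U, z i ^ 2 := by
    rw [Finset.mul_sum, Finset.mul_sum, ← Finset.sum_add_distrib]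
    refine Finset.sum_le_sum fun i _ => ?_
    simp only [Pi.sub_apply]
    nlinarith [sq_nonneg (2 * z i - a i)]
  refine (pow_le_pow_iff_left₀ (norm2_nonneg _) (mul_nonneg (Real.sqrt_nonneg _)
    (norm2_nonneg _)) two_ne_zero).1 ?_
  rw [mul_pow, Real.sq_sqrt zero_le_two, norm2_trunc_sq, norm2_trunc_sq]
  linarith

lemma lsq_orthogonal {m n : ℕ} {A : Matrix (Fin m) (Fin n) ℝ} {y : Fin m → ℝ} {w : Fin n → ℝ}
    {U : Set (Fin n)} (hw : supp w ⊆ U)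
    (hmin : ∀ z : Fin n → ℝ, supp z ⊆ U → norm2 (y - A *ᵥ w) ≤ norm2 (y - A *ᵥ z))
    (v : Fin n → ℝ) (hv : supp v ⊆ U) : (y - A *ᵥ w) ⬝ᵥ (A *ᵥ v) = 0 := by
  have key : ∀ t : ℝ, 0 ≤ norm2 (A *ᵥ v) ^ 2 * (t * t)
      + 2 * ((y - A *ᵥ w) ⬝ᵥ (A *ᵥ v)) * t + 0 := by
    intro t
    have h1 := hmin (w - t • v) fun i hi => by
      by_contra h
      have hwi : w i = 0 := by
        by_contra h'
        exact h (hw h')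
      have hvi : v i = 0 := by
        by_contra h'
        exact h (hv h')
      exact hi (by simp [hwi, hvi])
    have h2 := pow_le_pow_left₀ (norm2_nonneg _) h1 2
    have h3 : y - A *ᵥ (w - t • v) = (y - A *ᵥ w) + t • (A *ᵥ v) := by
      rw [mulVec_sub, mulVec_smul]
      abel
    rw [h3] at h2
    simp only [norm2_sq] at h2 ⊢
    rw [add_dotProduct, dotProduct_add, dotProduct_add, smul_dotProduct, dotProduct_smul,
      smul_dotProduct, dotProduct_smul, dotProduct_comm (A *ᵥ v)] at h2
    simp only [smul_eq_mul] at h2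
    linarith
  have h := sq_le_of_quadratic_nonneg key
  rw [mul_zero] at h
  exact pow_eq_zero_iff two_ne_zero |>.1 (le_antisymm h (sq_nonneg _))

lemma quadratic_bound {t d c δ : ℝ} (hd : 0 ≤ d) (hc : 0 ≤ c) (h0 : 0 < δ) (h1 : δ < 1)
    (h : t ^ 2 ≤ (δ * t + c) ^ 2 + d ^ 2) :
    t ≤ d / Real.sqrt (1 - δ ^ 2) + c / (1 - δ) := by
  have hpos : 0 < 1 - δ ^ 2 := by nlinarith
  set r := Real.sqrt (1 - δ ^ 2) with hr
  have hr0 : 0 < r := Real.sqrt_pos.2 hpos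
  have hr2 : r ^ 2 = 1 - δ ^ 2 := Real.sq_sqrt hpos.le
  by_contra! hlt
  -- with `D = d / r`, the hypothesis reads `((1 - δ) t - c) ((1 + δ) t + c) ≤ (1 - δ²) D²`
  set D := d / r with hD
  have hD0 : 0 ≤ D := div_nonneg hd hr0.le
  have hd2 : d ^ 2 = (1 - δ) * D * ((1 + δ) * D) := by
    rw [hD]
    field_simp
    rw [hr2]
    ring
  have hδ : 0 < 1 - δ := by linarith
  have hcδ : 0 ≤ c / (1 - δ) := div_nonneg hc hδ.le
  have e1 : (1 - δ) * D < (1 - δ) * t - c := by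
    have := mul_lt_mul_of_pos_left hlt hδ
    rw [mul_add, mul_div_cancel₀ _ hδ.ne'] at this
    linarith
  have e2 : (1 + δ) * D < (1 + δ) * t + c := by nlinarith
  have e3 := mul_lt_mul'' e1 e2 (mul_nonneg hδ.le hD0) (mul_nonneg (by linarith) hD0)
  nlinarith

/-- The error of the least squares step in terms of the part of `a` missed by the support `U`. -/
lemma lsq_bound {m n k : ℕ} {A : Matrix (Fin m) (Fin n) ℝ} {δ1 δ2 : ℝ} (hδ1 : IsRIC A k δ1)
    (hδ2 : IsRIC A (2 * k) δ2) (S U : Finset (Fin n)) (hS : S.card ≤ k) (hU : U.card ≤ k)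
    (a w : Fin n → ℝ) (f y : Fin m → ℝ) (hy : y = A *ᵥ a + f) (ha : ∀ i ∉ S, a i = 0)
    (hw : supp w ⊆ U)
    (hmin : ∀ z : Fin n → ℝ, supp z ⊆ U → norm2 (y - A *ᵥ w) ≤ norm2 (y - A *ᵥ z)) :
    norm2 (w - a) ≤ norm2 (trunc Uᶜ a) / Real.sqrt (1 - δ2 ^ 2)
      + Real.sqrt (1 + δ1) * norm2 f / (1 - δ2) := by
  classical
  have hw0 : ∀ i ∉ U, w i = 0 := fun i hi => by
    by_contra h
    exact hi (hw h)
  set v := trunc U (w - a) with hv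
  have hvU : ∀ i ∉ U, v i = 0 := fun i hi => trunc_apply_of_notMem _ hi
  have hvU' : supp v ⊆ U := fun i hi => by
    by_contra h
    exact hi (hvU i h)
  have horth := lsq_orthogonal hw hmin v hvU'
  have hres : y - A *ᵥ w = f - A *ᵥ (w - a) := by
    rw [hy, mulVec_sub]
    abel
  rw [hres, sub_dotProduct, sub_eq_zero] at horth
  have hbil := ric_bilin hδ2 (S ∪ U) ((Finset.card_union_le S U).trans (by omega)) (w - a) v
    (fun i hi => by
      rw [Finset.notMem_union] at hi
      simp [ha i hi.1, hw0 i hi.2])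
    (fun i hi => hvU i (Finset.notMem_union.1 hi).2)
  have hvv : norm2 v ^ 2 = (w - a) ⬝ᵥ v := by
    rw [norm2_sq, hv, trunc_dotProduct_trunc, dotProduct_comm]
  have hAv : norm2 (A *ᵥ v) ≤ Real.sqrt (1 + δ1) * norm2 v := by
    have h1 := (hδ1.2.2 v ((ncard_supp_le hvU).trans hU)).2
    have h2 : 0 ≤ 1 + δ1 := by linarith [hδ1.1]
    refine (pow_le_pow_iff_left₀ (norm2_nonneg _) (mul_nonneg (Real.sqrt_nonneg _)
      (norm2_nonneg _)) two_ne_zero).1 ?_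
    rwa [mul_pow, Real.sq_sqrt h2]
  have hfv : f ⬝ᵥ (A *ᵥ v) ≤ norm2 f * (Real.sqrt (1 + δ1) * norm2 v) :=
    (dotProduct_le_norm2 _ _).trans (mul_le_mul_of_nonneg_left hAv (norm2_nonneg f))
  have hc0 : 0 ≤ Real.sqrt (1 + δ1) * norm2 f := mul_nonneg (Real.sqrt_nonneg _) (norm2_nonneg f)
  have hvle : norm2 v ≤ δ2 * norm2 (w - a) + Real.sqrt (1 + δ1) * norm2 f := by
    rcases (norm2_nonneg v).eq_or_lt with h0 | h0
    · rw [← h0]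
      exact add_nonneg (mul_nonneg hδ2.1.le (norm2_nonneg _)) hc0
    · refine le_of_mul_le_mul_left ?_ h0
      linarith
  have hpyth : norm2 (w - a) ^ 2 = norm2 v ^ 2 + norm2 (trunc Uᶜ a) ^ 2 := by
    rw [hv, norm2_trunc_sq, norm2_trunc_sq, norm2_sq, dotProduct,
      ← Finset.sum_add_sum_compl U]
    congr 1
    · exact Finset.sum_congr rfl fun i _ => (sq _).symm
    · refine Finset.sum_congr rfl fun i hi => ?_
      simp [hw0 i (Finset.mem_compl.1 hi), sq]
  refine quadratic_bound (norm2_nonneg _) hc0 hδ2.1 hδ2.2.1 ?_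
  rw [hpyth]
  exact add_le_add_left (pow_le_pow_left₀ (norm2_nonneg v) hvle 2) _

/-- `σ_m ≤ σ₁`, read off from `‖Aᵀu‖² = ⟨u, AAᵀu⟩ ≤ σ₁ ‖u‖ ‖Aᵀu‖`. -/
lemma minSingularValue_le_max {m n : ℕ} {A : Matrix (Fin m) (Fin n) ℝ} {σ1 σm : ℝ}
    (hσ1 : IsMaxSingularValue A σ1) (hσm : IsMinSingularValue A σm) : σm ≤ σ1 := by
  obtain ⟨h10, h1, -⟩ := hσ1
  obtain ⟨hm0, -, u, hu, hu1⟩ := hσm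
  have hupos : 0 < norm2 u := by
    refine (norm2_nonneg u).lt_of_ne' fun h => hu ?_
    have h2 := norm2_sq u
    rw [h] at h2
    exact dotProduct_self_eq_zero.1 (by linarith)
  rcases hm0.eq_or_lt with h0 | h0
  · rw [← h0]
    exact h10
  · have h2 : norm2 (Aᵀ *ᵥ u) ^ 2 ≤ norm2 u * (σ1 * norm2 (Aᵀ *ᵥ u)) := by
      calc norm2 (Aᵀ *ᵥ u) ^ 2 = u ⬝ᵥ (A *ᵥ (Aᵀ *ᵥ u)) := by
            rw [norm2_sq, dotProduct_mulVec u A, ← mulVec_transpose]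
        _ ≤ norm2 u * norm2 (A *ᵥ (Aᵀ *ᵥ u)) := dotProduct_le_norm2 _ _
        _ ≤ _ := mul_le_mul_of_nonneg_left (h1 _) hupos.le
    rw [hu1] at h2
    have h3 : 0 < σm * norm2 u ^ 2 := by positivity
    refine le_of_mul_le_mul_right ?_ h3
    nlinarith

/-- one NSHTP iteration in noisy settings. -/
theorem stmt_16 {m n : ℕ} (hmn : m ≤ n) (A : Matrix (Fin m) (Fin n) ℝ) (hA : A ≠ 0)
    (σ1 σm : ℝ) (hσ1 : IsMaxSingularValue A σ1) (hσm : IsMinSingularValue A σm)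
    (k : ℕ) (hk : 0 < k) (hkn : 3 * k ≤ n)
    (δ1 δ2 δ3 : ℝ) (hδ1 : IsRIC A k δ1) (hδ2 : IsRIC A (2 * k) δ2)
    (hδ3 : IsRIC A (3 * k) δ3)
    (ε lam : ℝ) (hε : σ1 ^ 2 < ε) (hlam0 : 0 ≤ lam) (hlam : lam ≤ ε + σm ^ 2)
    (x : Fin n → ℝ) (e : Fin m → ℝ) (y : Fin m → ℝ) (hy : y = A.mulVec x + e)
    (xS : Fin n → ℝ) (hxS : ∃ S : Set (Fin n), IsHardThresholding k x xS S)
    (e' : Fin m → ℝ) (he' : e' = A.mulVec (x - xS) + e)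
    (xp : Fin n → ℝ) (hxp : (supp xp).ncard ≤ k)
    (xbar : Fin n → ℝ)
    (hxbar : ∃ S : Set (Fin n),
      IsHardThresholding k
        (xp + lam • ((Aᵀ * A + ε • (1 : Matrix (Fin n) (Fin n) ℝ))⁻¹).mulVec
          (Aᵀ.mulVec (y - A.mulVec xp)))
        xbar S)
    (xp1 : Fin n → ℝ) (hxp1supp : supp xp1 ⊆ supp xbar)
    (hxp1min : ∀ z : Fin n → ℝ, supp z ⊆ supp xbar →
      norm2 (y - A.mulVec xp1) ≤ norm2 (y - A.mulVec z)) :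
    norm2 (xp1 - xS) ≤
      Real.sqrt 3 * (δ3 + σ1 ^ 2 - lam * σ1 ^ 2 / (ε + σ1 ^ 2)) /
          Real.sqrt (1 - δ2 ^ 2) * norm2 (xp - xS) +
      (Real.sqrt 3 * lam * σ1 / (Real.sqrt (1 - δ2 ^ 2) * (ε + σ1 ^ 2)) +
        Real.sqrt (1 + δ1) / (1 - δ2)) * norm2 e' := by
  classical
  obtain ⟨S₀, hS₀, -, hxS0, -⟩ := hxS
  obtain ⟨S₁, hS₁, hz1, hz2, hz3⟩ := hxbar
  set z := xp + lam • ((Aᵀ * A + ε • (1 : Matrix (Fin n) (Fin n) ℝ))⁻¹).mulVec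
          (Aᵀ.mulVec (y - A.mulVec xp)) with hz
  obtain ⟨S, rfl⟩ : ∃ S : Finset (Fin n), (S : Set (Fin n)) = S₀ :=
    ⟨S₀.toFinset, Set.coe_toFinset _⟩
  obtain ⟨S', rfl⟩ : ∃ S' : Finset (Fin n), (S' : Set (Fin n)) = S₁ :=
    ⟨S₁.toFinset, Set.coe_toFinset _⟩
  obtain ⟨U, hU⟩ : ∃ U : Finset (Fin n), (U : Set (Fin n)) = supp xbar :=
    ⟨(supp xbar).toFinset, Set.coe_toFinset _⟩
  obtain ⟨P, hP⟩ : ∃ P : Finset (Fin n), (P : Set (Fin n)) = supp xp :=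
    ⟨(supp xp).toFinset, Set.coe_toFinset _⟩
  rw [← hP, Set.ncard_coe_finset] at hxp
  rw [Set.ncard_coe_finset] at hS₀ hS₁
  simp only [Finset.mem_coe] at hxS0 hz1 hz2 hz3
  have hUmem : ∀ i, i ∈ U ↔ xbar i ≠ 0 := fun i => by
    rw [← Finset.mem_coe, hU]
    rfl
  have hPmem : ∀ i, i ∈ P ↔ xp i ≠ 0 := fun i => by
    rw [← Finset.mem_coe, hP]
    rfl
  have hUS : U ⊆ S' := fun i hi => by
    by_contra h
    exact (hUmem i).1 hi (hz2 i h)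
  have hzU : ∀ i ∈ S', i ∉ U → z i = 0 := fun i hi hiU => by
    rw [← hz1 i hi]
    by_contra h
    exact hiU ((hUmem i).2 h)
  have hy' : y = A *ᵥ xS + e' := by
    rw [hy, he', mulVec_sub]
    abel
  rw [← hU] at hxp1supp hxp1min
  have hε0 : 0 < ε := (sq_nonneg σ1).trans_lt hε
  have hσ : σm ^ 2 ≤ σ1 ^ 2 := pow_le_pow_left₀ hσm.1 (minSingularValue_le_max hσ1 hσm) 2
  have hmain := lsq_bound hδ1 hδ2 S U hS₀.le ((Finset.card_le_card hUS).trans hS₁.le) xS xp1 e' y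
    hy' hxS0 hxp1supp hxp1min
  have hthr := threshold_bound S S' U (hS₀.trans hS₁.symm) hUS z xS hxS0 hzU hz3
  set R := (Aᵀ * A + ε • (1 : Matrix (Fin n) (Fin n) ℝ))⁻¹ with hR
  set u := xp - xS with hu
  have hdecomp : z - xS = (u - (Aᵀ * A) *ᵥ u)
      + (((Aᵀ * A) *ᵥ u - lam • (R *ᵥ ((Aᵀ * A) *ᵥ u))) + lam • (R *ᵥ (Aᵀ *ᵥ e'))) := by
    have h1 : y - A *ᵥ xp = e' - A *ᵥ u := by
      rw [hy', hu, mulVec_sub]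
      abel
    rw [hz, h1, mulVec_sub, mulVec_sub, mulVec_mulVec u, smul_sub, hu]
    abel
  have hT1 := ric_trunc hδ3 (S ∪ S' ∪ P) (S ∪ S') Finset.subset_union_left
    (by
      have h1 := Finset.card_union_le (S ∪ S') P
      have h2 := Finset.card_union_le S S'
      omega) u
    (fun i hi => by
      simp only [Finset.notMem_union] at hi
      have h1 : xp i = 0 := by
        by_contra h
        exact hi.2 ((hPmem i).2 h)
      simp [hu, h1, hxS0 i hi.1.1])
  have hT2 := norm2_gap hσ1 hσm hσ hε0 hlam u
  have hT3 := norm2_resolvent hσ1 hσm hε e'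
  rw [← hR] at hT2 hT3
  have hzx : norm2 (trunc (S ∪ S') (z - xS)) ≤
      (δ3 + σ1 ^ 2 - lam * σ1 ^ 2 / (ε + σ1 ^ 2)) * norm2 u
        + lam * (σ1 / (ε + σ1 ^ 2) * norm2 e') := by
    rw [hdecomp, trunc_add]
    refine (norm2_add_le _ _).trans ?_
    have h1 := (norm2_trunc_le (S ∪ S') (((Aᵀ * A) *ᵥ u - lam • (R *ᵥ ((Aᵀ * A) *ᵥ u)))
      + lam • (R *ᵥ (Aᵀ *ᵥ e')))).trans (norm2_add_le _ _)
    rw [norm2_smul, abs_of_nonneg hlam0] at h1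
    have h2 := mul_le_mul_of_nonneg_left hT3 hlam0
    linarith
  have hd : norm2 (trunc Uᶜ xS) ≤ Real.sqrt 3 *
      ((δ3 + σ1 ^ 2 - lam * σ1 ^ 2 / (ε + σ1 ^ 2)) * norm2 u
        + lam * (σ1 / (ε + σ1 ^ 2) * norm2 e')) :=
    hthr.trans (mul_le_mul (Real.sqrt_le_sqrt (by norm_num)) hzx (norm2_nonneg _)
      (Real.sqrt_nonneg _))
  have hfin := div_le_div_of_nonneg_right hd (Real.sqrt_nonneg (1 - δ2 ^ 2))
  refine (hmain.trans (add_le_add_left hfin _)).trans (le_of_eq ?_)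
  rw [← div_div]
  ring
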